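/- arXiv:math-ph/0104021 — 6 statements merged into one kernel-verified Lean document; each statement's English description precedes it below -/
import Mathlib

section
/- Let V be a finite-dimensional real vector space with a nondegenerate alternating bilinear form ω, and let D, G ⊆ V be subspaces such that dim G + dim D = dim V and D^⊥ ∩ G^⊥ = {0}. Then for every vector v₀ ∈ V there exists a unique g ∈ G such that v₀ + g ∈ D. -/
/-- The symplectic orthogonal of a subspace `U` with respect to a bilinear form `ω`:
`U^⊥ = {v ∈ V : ω(v,u) = 0 for all u ∈ U}`. -/
def sympOrth {V : Type} [AddCommGroup V] [Module ℝ V]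
    (ω : V →ₗ[ℝ] V →ₗ[ℝ] ℝ) (U : Submodule ℝ V) : Submodule ℝ V where
  carrier := {v | ∀ u ∈ U, ω v u = 0}
  zero_mem' := by intro u hu; simp
  add_mem' := by intro a b ha hb u hu; simp [ha u hu, hb u hu]
  smul_mem' := by intro c a ha u hu; simp [ha u hu]

/-- For a nondegenerate alternating bilinear form `ω` on a finite-dimensional real vector
space `V` and subspaces `D, G ⊆ V` with `dim G + dim D = dim V` and `D^⊥ ∩ G^⊥ = 0`, for
every `v₀ ∈ V` there is a unique `g ∈ G` with `v₀ + g ∈ D`. -/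
theorem compatible_nonholonomic_unique_solution
    {V : Type} [AddCommGroup V] [Module ℝ V] [FiniteDimensional ℝ V]
    (ω : V →ₗ[ℝ] V →ₗ[ℝ] ℝ)
    (hω_nd : ∀ v : V, (∀ u : V, ω v u = 0) → v = 0)
    (hω_alt : ∀ v : V, ω v v = 0)
    (D G : Submodule ℝ V)
    (hdim : Module.finrank ℝ G + Module.finrank ℝ D = Module.finrank ℝ V)
    (hint : sympOrth ω D ⊓ sympOrth ω G = ⊥) :
    ∀ v₀ : V, ∃! g : V, g ∈ G ∧ v₀ + g ∈ D := by
  have hinj : Function.Injective ω := by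
    rw [injective_iff_map_eq_zero]
    intro v hv
    exact hω_nd v fun u => by rw [hv]; rfl
  have hsurj : Function.Surjective ω :=
    (LinearMap.injective_iff_surjective_of_finrank_eq_finrank
      (Subspace.dual_finrank_eq (K := ℝ) (V := V)).symm).1 hinj
  have htop : G ⊔ D = ⊤ := by
    by_contra hne
    obtain ⟨f, hf, hle⟩ := Submodule.exists_le_ker_of_lt_top _ (lt_top_iff_ne_top.2 hne)
    obtain ⟨v, rfl⟩ := hsurj f
    have hv : v ∈ sympOrth ω D ⊓ sympOrth ω G :=
      ⟨fun u hu => hle (le_sup_right (a := G) hu), fun u hu => hle (le_sup_left (b := D) hu)⟩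
    rw [hint, Submodule.mem_bot] at hv
    exact hf (by rw [hv, map_zero])
  have hbot : G ⊓ D = ⊥ := by
    have h := Submodule.finrank_sup_add_finrank_inf_eq G D
    rw [htop, finrank_top, hdim] at h
    exact Submodule.finrank_eq_zero.1 (by omega)
  intro v₀
  have hv : v₀ ∈ G ⊔ D := htop ▸ Submodule.mem_top
  obtain ⟨g, hg, d, hd, rfl⟩ := Submodule.mem_sup.1 hv
  refine ⟨-g, ⟨G.neg_mem hg, by simpa using hd⟩, ?_⟩
  rintro g' ⟨hg', hd'⟩
  have hmem : g + g' ∈ G ⊓ D := by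
    refine ⟨G.add_mem hg hg', ?_⟩
    have h := D.sub_mem hd' hd
    rwa [show g + d + g' - d = g + g' by abel] at h
  rw [hbot, Submodule.mem_bot] at hmem
  exact (neg_eq_of_add_eq_zero_right hmem).symm
end

section
/- Let V be a finite-dimensional real vector space with a nondegenerate alternating bilinear form ω, and let S : V → V be a linear endomorphism with ω(S u, v) = −ω(u, S v) for all u, v ∈ V, and such that ω(S v, v) > 0 for every v ∈ V with S v ≠ 0. Let A ⊆ V be a subspace with A ∩ ker S = {0}. Then for every v₀ ∈ V there exists a unique g ∈ S(A) such that v₀ + g ∈ A^⊥. -/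
/-- Faddeev–Vershik theorem (linear-algebraic content): with `ω` nondegenerate
alternating, `S` satisfying `ω(Su,v) = −ω(u,Sv)` and `ω(Sv,v) > 0` whenever `Sv ≠ 0`,
and `A` with `A ∩ ker S = 0`, every `v₀` admits a unique `g ∈ S(A)` with
`v₀ + g ∈ A^⊥`. -/
theorem faddeev_vershik_unique_solution
    {V : Type} [AddCommGroup V] [Module ℝ V] [FiniteDimensional ℝ V]
    (ω : V →ₗ[ℝ] V →ₗ[ℝ] ℝ)
    (hω_nd : ∀ v : V, (∀ u : V, ω v u = 0) → v = 0)
    (hω_alt : ∀ v : V, ω v v = 0)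
    (S : V →ₗ[ℝ] V)
    (hS : ∀ u v : V, ω (S u) v = - ω u (S v))
    (hpos : ∀ v : V, S v ≠ 0 → 0 < ω (S v) v)
    (A : Submodule ℝ V)
    (hA : A ⊓ LinearMap.ker S = ⊥) :
    ∀ v₀ : V, ∃! g : V, g ∈ Submodule.map S A ∧ v₀ + g ∈ sympOrth ω A := by
  intro v₀
  let T : A →ₗ[ℝ] Module.Dual ℝ A :=
    (LinearMap.lcomp ℝ ℝ A.subtype).comp ((ω.comp S).comp A.subtype)
  have hT : ∀ a b : A, T a b = ω (S a) b := fun a b => rfl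
  have key : ∀ a : A, ω (S a) a = 0 → a = 0 := by
    intro a h
    have h0 : S a = 0 := by
      by_contra hne
      exact (hpos a hne).ne' h
    have hm : (a : V) ∈ A ⊓ LinearMap.ker S := ⟨a.2, h0⟩
    rw [hA] at hm
    exact Subtype.ext ((Submodule.mem_bot ℝ).1 hm)
  have hinj : Function.Injective T := by
    rw [injective_iff_map_eq_zero]
    intro a ha
    apply key
    rw [← hT, ha]
    rfl
  have hsurj : Function.Surjective T :=
    (LinearMap.injective_iff_surjective_of_finrank_eq_finrank
      (Subspace.dual_finrank_eq (K := ℝ) (V := A)).symm).1 hinj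
  obtain ⟨a, ha⟩ := hsurj (-((ω v₀).comp A.subtype))
  have ha' : ∀ u ∈ A, ω v₀ u + ω (S a) u = 0 := by
    intro u hu
    have h := LinearMap.congr_fun ha ⟨u, hu⟩
    rw [hT] at h
    simp only [LinearMap.neg_apply, LinearMap.comp_apply, Submodule.subtype_apply] at h
    linarith
  refine ⟨S a, ⟨⟨a, a.2, rfl⟩, ?_⟩, ?_⟩
  · intro u hu
    rw [map_add, LinearMap.add_apply]
    exact ha' u hu
  · rintro g ⟨⟨b, hb, rfl⟩, hg⟩
    have hba : (⟨b, hb⟩ : A) = a := by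
      apply hinj
      ext ⟨u, hu⟩
      rw [hT, hT]
      have h1 : ω (v₀ + S b) u = 0 := hg u hu
      rw [map_add, LinearMap.add_apply] at h1
      have h2 := ha' u hu
      simp only
      linarith
    rw [← hba]
end

section
/- Let V be a finite-dimensional real vector space with a nondegenerate alternating bilinear form ω, and let S : V → V be a linear endomorphism with ω(S u, v) = −ω(u, S v) for all u, v ∈ V, and such that ω(S v, v) > 0 for every v ∈ V with S v ≠ 0. Then for any subspace A ⊆ V with A ∩ ker S = {0} one has A ∩ (S(A))^⊥ = {0}. -/
/-- A definite Lagrangian with admissible constraints satisfies the compatibility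
condition: if `A ∩ ker S = 0` then `A ∩ (S(A))^⊥ = 0`. -/
theorem definite_admissible_implies_compatibility
    {V : Type} [AddCommGroup V] [Module ℝ V] [FiniteDimensional ℝ V]
    (ω : V →ₗ[ℝ] V →ₗ[ℝ] ℝ)
    (hω_nd : ∀ v : V, (∀ u : V, ω v u = 0) → v = 0)
    (hω_alt : ∀ v : V, ω v v = 0)
    (S : V →ₗ[ℝ] V)
    (hS : ∀ u v : V, ω (S u) v = - ω u (S v))
    (hpos : ∀ v : V, S v ≠ 0 → 0 < ω (S v) v)
    (A : Submodule ℝ V)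
    (hA : A ⊓ LinearMap.ker S = ⊥) :
    A ⊓ sympOrth ω (Submodule.map S A) = ⊥ := by
  rw [eq_bot_iff]
  rintro v ⟨hvA, hv⟩
  have h0 : ω v (S v) = 0 := hv (S v) (Submodule.mem_map_of_mem hvA)
  have hSv : S v = 0 := by
    by_contra h
    have h1 := hpos v h
    rw [hS, h0] at h1
    simp at h1
  rw [← hA]
  exact ⟨hvA, LinearMap.mem_ker.mpr hSv⟩
end

section
/- Let V be a finite-dimensional real vector space with a nondegenerate alternating bilinear form ω, and let S : V → V be a linear endomorphism with ω(S u, v) = −ω(u, S v) for all u, v ∈ V. Let U ⊆ V be a subspace such that U^⊥ ∩ ker S = {0} and S(U^⊥) ∩ U = {0}. Then V = U ⊕ S(U^⊥), and consequently for every v₀ ∈ V there exists a unique g ∈ S(U^⊥) such that v₀ + g ∈ U. -/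
/-- Regular non-holonomic Lagrangian systems (linear-algebraic content): if
`U^⊥ ∩ ker S = 0` and `S(U^⊥) ∩ U = 0` then `V = U ⊕ S(U^⊥)` and every `v₀`
admits a unique `g ∈ S(U^⊥)` with `v₀ + g ∈ U`. -/
theorem regular_nonholonomic_unique_solution
    {V : Type} [AddCommGroup V] [Module ℝ V] [FiniteDimensional ℝ V]
    (ω : V →ₗ[ℝ] V →ₗ[ℝ] ℝ)
    (hω_nd : ∀ v : V, (∀ u : V, ω v u = 0) → v = 0)
    (hω_alt : ∀ v : V, ω v v = 0)
    (S : V →ₗ[ℝ] V)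
    (hS : ∀ u v : V, ω (S u) v = - ω u (S v))
    (U : Submodule ℝ V)
    (h1 : sympOrth ω U ⊓ LinearMap.ker S = ⊥)
    (h2 : Submodule.map S (sympOrth ω U) ⊓ U = ⊥) :
    IsCompl U (Submodule.map S (sympOrth ω U)) ∧
    ∀ v₀ : V, ∃! g : V, g ∈ Submodule.map S (sympOrth ω U) ∧ v₀ + g ∈ U := by
  have hker : LinearMap.ker (U.dualRestrict ∘ₗ ω) = sympOrth ω U := by
    ext v
    constructor
    · intro hv u hu
      have := LinearMap.congr_fun (LinearMap.mem_ker.mp hv) ⟨u, hu⟩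
      simpa using this
    · intro hv
      rw [LinearMap.mem_ker]
      ext u
      simpa using hv u u.2
  have hrn := LinearMap.finrank_range_add_finrank_ker (U.dualRestrict ∘ₗ ω)
  rw [hker] at hrn
  have hr := Submodule.finrank_le (LinearMap.range (U.dualRestrict ∘ₗ ω))
  rw [Subspace.dual_finrank_eq] at hr
  have hmap : Module.finrank ℝ (Submodule.map S (sympOrth ω U))
      = Module.finrank ℝ (sympOrth ω U) := by
    rw [← LinearMap.range_domRestrict]
    apply LinearMap.finrank_range_of_inj
    rw [← LinearMap.ker_eq_bot, LinearMap.ker_eq_bot']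
    intro x hx
    have : (x : V) ∈ sympOrth ω U ⊓ LinearMap.ker S := ⟨x.2, hx⟩
    rw [h1, Submodule.mem_bot] at this
    exact Subtype.ext this
  have hd : Disjoint U (Submodule.map S (sympOrth ω U)) := by
    rw [disjoint_iff, inf_comm]
    exact h2
  have htop := Submodule.eq_top_of_disjoint U (Submodule.map S (sympOrth ω U)) (by omega) hd
  refine ⟨⟨hd, codisjoint_iff.mpr htop⟩, fun v₀ => ?_⟩
  have hv : v₀ ∈ U ⊔ Submodule.map S (sympOrth ω U) := by rw [htop]; trivial
  obtain ⟨y, hy, z, hz, hyz⟩ := Submodule.mem_sup.mp hv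
  refine ⟨-z, ⟨neg_mem hz, ?_⟩, ?_⟩
  · rw [← hyz]
    simpa using hy
  · rintro g ⟨hg, hgU⟩
    have hmem : g + z ∈ Submodule.map S (sympOrth ω U) ⊓ U := by
      refine ⟨add_mem hg hz, ?_⟩
      have : g + z = (v₀ + g) - y := by rw [← hyz]; abel
      rw [this]
      exact sub_mem hgU hy
    rw [h2, Submodule.mem_bot] at hmem
    exact eq_neg_of_add_eq_zero_left hmem
end

section
/- Let M, m, R, r, I₁, I₂, g be real numbers with M ≥ 0, m ≥ 0, R ≥ 0, r ≥ 0, I₁ > 0, I₂ > 0, and let x, y, z, θ, φ, λ₁, λ₂, λ₃ : ℝ → ℝ with x, y, z, θ, φ twice differentiable. Suppose that for all t: (M+m)·x''(t) = λ₁(t), (M+m)·y''(t) = λ₂(t), m·z''(t) = λ₃(t) − m·g, I₁·φ''(t) = −λ₁(t)·R·cos(θ(t)) − λ₂(t)·R·sin(θ(t)) − λ₃(t)·r, I₂·θ''(t) = 0, together with the constraints x'(t) = R·cos(θ(t))·φ'(t), y'(t) = R·sin(θ(t))·φ'(t), z'(t) = r·φ'(t). Then for all t: φ''(t) = −m·g·r/(I₁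 + (M+m)·R² + m·r²) and θ''(t) = 0. -/
/-- Appell's machine (case `ρ = 0`): the constrained Euler–Lagrange equations with
Chetaev multipliers `λ₁, λ₂, λ₃` and the rolling/rope constraints imply the reduced
equations of motion `φ̈ = −mgr/(I₁ + (M+m)R² + mr²)` and `θ̈ = 0`. -/
theorem appell_machine_equations_of_motion
    (M m R r I₁ I₂ g : ℝ)
    (hM : 0 ≤ M) (hm : 0 ≤ m) (hR : 0 ≤ R) (hr : 0 ≤ r) (hI₁ : 0 < I₁) (hI₂ : 0 < I₂)
    (x y z θ φ lam₁ lam₂ lam₃ : ℝ → ℝ)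
    (hx : Differentiable ℝ x) (hx' : Differentiable ℝ (deriv x))
    (hy : Differentiable ℝ y) (hy' : Differentiable ℝ (deriv y))
    (hz : Differentiable ℝ z) (hz' : Differentiable ℝ (deriv z))
    (hθ : Differentiable ℝ θ) (hθ' : Differentiable ℝ (deriv θ))
    (hφ : Differentiable ℝ φ) (hφ' : Differentiable ℝ (deriv φ))
    (heqx : ∀ t, (M + m) * deriv (deriv x) t = lam₁ t)
    (heqy : ∀ t, (M + m) * deriv (deriv y) t = lam₂ t)
    (heqz : ∀ t, m * deriv (deriv z) t = lam₃ t - m * g)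
    (heqφ : ∀ t, I₁ * deriv (deriv φ) t =
      -(lam₁ t) * R * Real.cos (θ t) - lam₂ t * R * Real.sin (θ t) - lam₃ t * r)
    (heqθ : ∀ t, I₂ * deriv (deriv θ) t = 0)
    (hc1 : ∀ t, deriv x t = R * Real.cos (θ t) * deriv φ t)
    (hc2 : ∀ t, deriv y t = R * Real.sin (θ t) * deriv φ t)
    (hc3 : ∀ t, deriv z t = r * deriv φ t) :
    ∀ t, deriv (deriv φ) t = -(m * g * r) / (I₁ + (M + m) * R ^ 2 + m * r ^ 2) ∧
      deriv (deriv θ) t = 0 := by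
  intro t
  refine ⟨?_, (mul_eq_zero.mp (heqθ t)).resolve_left hI₂.ne'⟩
  have dθ := (hθ t).hasDerivAt
  have dφ := (hφ' t).hasDerivAt
  have hX : deriv (deriv x) t = R * (-Real.sin (θ t) * deriv θ t) * deriv φ t
      + R * Real.cos (θ t) * deriv (deriv φ) t := by
    rw [funext hc1]
    exact ((dθ.cos.const_mul R).mul dφ).deriv
  have hY : deriv (deriv y) t = R * (Real.cos (θ t) * deriv θ t) * deriv φ t
      + R * Real.sin (θ t) * deriv (deriv φ) t := by
    rw [funext hc2]
    exact ((dθ.sin.const_mul R).mul dφ).deriv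
  have hZ : deriv (deriv z) t = r * deriv (deriv φ) t := by
    rw [funext hc3]
    exact (dφ.const_mul r).deriv
  have hD : 0 < I₁ + (M + m) * R ^ 2 + m * r ^ 2 := by positivity
  rw [eq_div_iff hD.ne']
  have h := heqφ t
  have hl : lam₃ t = m * deriv (deriv z) t + m * g := by linarith [heqz t]
  rw [hl, ← heqx t, ← heqy t, hX, hY, hZ] at h
  linear_combination h - (M + m) * R ^ 2 * deriv (deriv φ) t * Real.sin_sq_add_cos_sq (θ t)
end

section
/- Let m₁, m₂ be positive real numbers and let x₁, y₁, x₂, y₂, λ : ℝ → ℝ with x₁, y₁, x₂, y₂ twice differentiable. Suppose that for all t: m₁·x₁''(t) = λ(t)·y₂'(t), m₁·y₁''(t) = −λ(t)·x₂'(t), m₂·x₂''(t) = −λ(t)·y₁'(t), m₂·y₂''(t) = λ(t)·x₁'(t), that the constraint x₁'(t)·y₂'(t) − x₂'(t)·y₁'(t) = 0 holds for all t, and that for every t at least one of the velocity vectors (x₁'(t), y₁'(t)) and (x₂'(t), y₂'(t)) is nonzero. Then λ(t) = 0 for all t, and consequently x₁''(t) = y₁''(t) = x₂''(t) = y₂''(t)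 = 0 for all t, i.e. the motion is free. -/
/-- Benenti's system with Chetaev forces: if at every time at least one of the two
velocity vectors is nonzero, the multiplier vanishes and the motion is free. -/
theorem benenti_multiplier_vanishes
    (m₁ m₂ : ℝ) (hm₁ : 0 < m₁) (hm₂ : 0 < m₂)
    (x₁ y₁ x₂ y₂ lam : ℝ → ℝ)
    (hx₁ : Differentiable ℝ x₁) (hx₁' : Differentiable ℝ (deriv x₁))
    (hy₁ : Differentiable ℝ y₁) (hy₁' : Differentiable ℝ (deriv y₁))
    (hx₂ : Differentiable ℝ x₂) (hx₂' : Differentiable ℝ (deriv x₂))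
    (hy₂ : Differentiable ℝ y₂) (hy₂' : Differentiable ℝ (deriv y₂))
    (heq1 : ∀ t, m₁ * deriv (deriv x₁) t = lam t * deriv y₂ t)
    (heq2 : ∀ t, m₁ * deriv (deriv y₁) t = -(lam t) * deriv x₂ t)
    (heq3 : ∀ t, m₂ * deriv (deriv x₂) t = -(lam t) * deriv y₁ t)
    (heq4 : ∀ t, m₂ * deriv (deriv y₂) t = lam t * deriv x₁ t)
    (hcon : ∀ t, deriv x₁ t * deriv y₂ t - deriv x₂ t * deriv y₁ t = 0)
    (hvel : ∀ t, (deriv x₁ t, deriv y₁ t) ≠ (0, 0) ∨ (deriv x₂ t, deriv y₂ t) ≠ (0, 0)) :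
    ∀ t, lam t = 0 ∧ deriv (deriv x₁) t = 0 ∧ deriv (deriv y₁) t = 0 ∧
      deriv (deriv x₂) t = 0 ∧ deriv (deriv y₂) t = 0 := by
  intro t
  have hd : deriv (deriv x₁) t * deriv y₂ t + deriv x₁ t * deriv (deriv y₂) t
      - (deriv (deriv x₂) t * deriv y₁ t + deriv x₂ t * deriv (deriv y₁) t) = 0 := by
    have h := (((hx₁' t).hasDerivAt.mul (hy₂' t).hasDerivAt).sub
      ((hx₂' t).hasDerivAt.mul (hy₁' t).hasDerivAt))
    have h0 : (deriv x₁ * deriv y₂ - deriv x₂ * deriv y₁) = fun _ => (0 : ℝ) := by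
      funext s
      exact hcon s
    rw [h0] at h
    exact h.unique (hasDerivAt_const t (0 : ℝ))
  have e1 := heq1 t
  have e2 := heq2 t
  have e3 := heq3 t
  have e4 := heq4 t
  have hv := hvel t
  generalize deriv (deriv x₁) t = a₁ at *
  generalize deriv (deriv y₁) t = b₁ at *
  generalize deriv (deriv x₂) t = a₂ at *
  generalize deriv (deriv y₂) t = b₂ at *
  generalize deriv x₁ t = u₁ at *
  generalize deriv y₁ t = v₁ at *
  generalize deriv x₂ t = u₂ at *
  generalize deriv y₂ t = v₂ at *
  have key : lam t * (m₂ * (u₂ ^ 2 + v₂ ^ 2) + m₁ * (u₁ ^ 2 + v₁ ^ 2)) = 0 := by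
    linear_combination m₁ * m₂ * hd - m₂ * v₂ * e1 - m₁ * u₁ * e4 + m₁ * v₁ * e3 + m₂ * u₂ * e2
  have sq_pos' : ∀ u v : ℝ, (u, v) ≠ (0, 0) → 0 < u ^ 2 + v ^ 2 := by
    intro u v h
    by_contra hn
    apply h
    have hu : u = 0 := by nlinarith [sq_nonneg u, sq_nonneg v]
    have hv : v = 0 := by nlinarith [sq_nonneg u, sq_nonneg v]
    rw [hu, hv]
  have hpos : 0 < m₂ * (u₂ ^ 2 + v₂ ^ 2) + m₁ * (u₁ ^ 2 + v₁ ^ 2) := by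
    rcases hv with h | h
    · have := sq_pos' _ _ h
      positivity
    · have := sq_pos' _ _ h
      positivity
  have hl : lam t = 0 := (mul_eq_zero.mp key).resolve_right hpos.ne'
  rw [hl] at e1 e2 e3 e4
  refine ⟨hl, ?_, ?_, ?_, ?_⟩
  · simpa [hm₁.ne'] using e1
  · simpa [hm₁.ne'] using e2
  · simpa [hm₂.ne'] using e3
  · simpa [hm₂.ne'] using e4
end
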